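/- Property 5.1(I): let G be a finite directed graph, v a vertex, and (k_v, l_v) a skyline coreness of v. Then v has at least k_v in-neighbors v' in G such that some skyline coreness (k',l') of v' satisfies k_v ≤ k' and l_v ≤ l', and v has at least l_v out-neighbors v'' in G such that some skyline coreness (k'',l'') of v'' satisfies k_v ≤ k'' and l_v ≤ l''. -/

import Mathlib

open Finset

variable {V : Type*} [Fintype V] [DecidableEq V]

/-- The in-neighbors of `v` within `S`: vertices `u ∈ S` with an edge `u → v`. -/
def inN (E : V → V → Prop) [DecidableRel E] (S : Finset V) (v : V) : Finset V :=
  S.filter (fun u => E u v)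

/-- The out-neighbors of `v` within `S`: vertices `u ∈ S` with an edge `v → u`. -/
def outN (E : V → V → Prop) [DecidableRel E] (S : Finset V) (v : V) : Finset V :=
  S.filter (fun u => E v u)

/-- `S` satisfies the `(k,l)`-degree constraints: every `v ∈ S` has at least `k`
in-neighbors in `S` and at least `l` out-neighbors in `S`. -/
def satisfiesKL (E : V → V → Prop) [DecidableRel E] (k l : ℕ) (S : Finset V) : Prop :=
  ∀ v ∈ S, k ≤ (inN E S v).card ∧ l ≤ (outN E S v).card

instance (E : V → V → Prop) [DecidableRel E] (k l : ℕ) (S : Finset V) :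
    Decidable (satisfiesKL E k l S) := by unfold satisfiesKL; infer_instance

/-- The `(k,l)`-core of the graph: the union of all vertex subsets satisfying the
`(k,l)`-degree constraints. -/
def core (E : V → V → Prop) [DecidableRel E] (k l : ℕ) : Finset V :=
  (Finset.univ.powerset.filter (satisfiesKL E k l)).sup id

/-- `kmax E v`: the largest `k` such that `v` belongs to the `(k,0)`-core. -/
noncomputable def kmax (E : V → V → Prop) [DecidableRel E] (v : V) : ℕ :=
  sSup {k : ℕ | v ∈ core E k 0}

/-- `lmax E v k`: the largest `l` such that `v` belongs to the `(k,l)`-core. -/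
noncomputable def lmax (E : V → V → Prop) [DecidableRel E] (v : V) (k : ℕ) : ℕ :=
  sSup {l : ℕ | v ∈ core E k l}

/-- The H-index of a finite multiset of naturals: the largest `h` such that at least
`h` elements (with multiplicity) are `≥ h`. -/
noncomputable def hIndex (M : Multiset ℕ) : ℕ :=
  sSup {h : ℕ | h ≤ (M.filter (fun x => h ≤ x)).card}

/-- The `n`-order in-H-index of a vertex `v` in the graph with vertex set `S`
and edge relation `E`. -/
noncomputable def iH (E : V → V → Prop) [DecidableRel E] (S : Finset V) : ℕ → V → ℕ
  | 0 => fun v => (inN E S v).card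
  | n + 1 => fun v => hIndex ((inN E S v).val.map (iH E S n))

/-- The `n`-order out-H-index of a vertex `v` in the graph with vertex set `S`
and edge relation `E`. -/
noncomputable def oH (E : V → V → Prop) [DecidableRel E] (S : Finset V) : ℕ → V → ℕ
  | 0 => fun v => (outN E S v).card
  | n + 1 => fun v => hIndex ((outN E S v).val.map (oH E S n))

/-- The eventual (limit) value of the in-H-index sequence. -/
noncomputable def iHlim (E : V → V → Prop) [DecidableRel E] (S : Finset V) (v : V) : ℕ :=
  ⨅ n, iH E S n v

/-- The eventual (limit) value of the out-H-index sequence. -/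
noncomputable def oHlim (E : V → V → Prop) [DecidableRel E] (S : Finset V) (v : V) : ℕ :=
  ⨅ n, oH E S n v

/-- `(k,l)` is a skyline coreness of `v`: `v` is in the `(k,l)`-core and there is no
pair `(k',l')` strictly dominating `(k,l)` with `v` in the `(k',l')`-core. -/
def skyline (E : V → V → Prop) [DecidableRel E] (v : V) (p : ℕ × ℕ) : Prop :=
  v ∈ core E p.1 p.2 ∧
    ¬ ∃ q : ℕ × ℕ, (p.1 ≤ q.1 ∧ p.2 ≤ q.2 ∧ p ≠ q) ∧ v ∈ core E q.1 q.2

theorem mem_core_iff' (E : V → V → Prop) [DecidableRel E] (k l : ℕ) (v : V) :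
    v ∈ core E k l ↔ ∃ S : Finset V, satisfiesKL E k l S ∧ v ∈ S := by
  unfold core
  simp [Finset.mem_sup]

theorem exists_skyline' (E : V → V → Prop) [DecidableRel E] (u : V) (n : ℕ) :
    ∀ k l : ℕ, 2 * Fintype.card V ≤ k + l + n → u ∈ core E k l →
      ∃ p : ℕ × ℕ, skyline E u p ∧ k ≤ p.1 ∧ l ≤ p.2 := by
  induction n with
  | zero =>
    intro k l hn hu
    refine ⟨(k, l), ⟨hu, ?_⟩, le_rfl, le_rfl⟩
    rintro ⟨⟨a, b⟩, ⟨h1, h2, h3⟩, h4⟩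
    obtain ⟨S, hS, hm⟩ := (mem_core_iff' E a b u).1 h4
    have h5 := (hS u hm).1.trans (Finset.card_le_univ _)
    have h6 := (hS u hm).2.trans (Finset.card_le_univ _)
    apply h3
    simp only [Prod.mk.injEq]
    simp only at h1 h2
    omega
  | succ n ih =>
    intro k l hn hu
    by_cases hs : skyline E u (k, l)
    · exact ⟨_, hs, le_rfl, le_rfl⟩
    · have : ∃ q : ℕ × ℕ, (k ≤ q.1 ∧ l ≤ q.2 ∧ (k, l) ≠ q) ∧ u ∈ core E q.1 q.2 := by
        by_contra hc
        exact hs ⟨hu, hc⟩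
      obtain ⟨⟨a, b⟩, ⟨h1, h2, h3⟩, h4⟩ := this
      simp only [ne_eq, Prod.mk.injEq] at h1 h2 h3 h4
      obtain ⟨p, hp, h5, h6⟩ := ih a b (by omega) h4
      exact ⟨p, hp, h1.trans h5, h2.trans h6⟩

/-- **Property 5.1(I).** If `(kv,lv)` is a skyline coreness of `v`, then
`v` has at least `kv` in-neighbors having a skyline coreness dominating `(kv,lv)`, and
at least `lv` such out-neighbors. -/
theorem skyline_neighbor_property_I (E : V → V → Prop) [DecidableRel E]
    (v : V) (kv lv : ℕ) (h : skyline E v (kv, lv)) :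
    kv ≤ Set.ncard {u : V | E u v ∧ ∃ p : ℕ × ℕ, skyline E u p ∧ kv ≤ p.1 ∧ lv ≤ p.2} ∧
    lv ≤ Set.ncard {u : V | E v u ∧ ∃ p : ℕ × ℕ, skyline E u p ∧ kv ≤ p.1 ∧ lv ≤ p.2} := by
  obtain ⟨S, hS, hm⟩ := (mem_core_iff' E kv lv v).1 h.1
  have key : ∀ u ∈ S, ∃ p : ℕ × ℕ, skyline E u p ∧ kv ≤ p.1 ∧ lv ≤ p.2 := fun u hu =>
    exists_skyline' E u (2 * Fintype.card V) kv lv (by omega)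
      ((mem_core_iff' E kv lv u).2 ⟨S, hS, hu⟩)
  constructor
  · refine (hS v hm).1.trans ?_
    rw [← Set.ncard_coe_finset]
    refine Set.ncard_le_ncard ?_ (Set.toFinite _)
    intro u hu
    have hu' := Finset.mem_filter.1 (Finset.mem_coe.1 hu)
    exact ⟨hu'.2, key u hu'.1⟩
  · refine (hS v hm).2.trans ?_
    rw [← Set.ncard_coe_finset]
    refine Set.ncard_le_ncard ?_ (Set.toFinite _)
    intro u hu
    have hu' := Finset.mem_filter.1 (Finset.mem_coe.1 hu)
    exact ⟨hu'.2, key u hu'.1⟩
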